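/- Watson's lemma for asymptotics with respect to a germ (Lemma 7.19): Let d ≥ 1, s > 0, P holomorphic on D(0;R) with P(0) = 0 and P not identically zero, and Π = Π_P(θ_1,θ_2;R) a P-sector with θ_2 − θ_1 > sπ. If f : Π → ℂ is holomorphic and there exist constants K, A > 0 such that |f(x)| ≤ K·A^N·Γ(sN+1)·|P(x)|^N for every N ∈ ℕ and every x ∈ Π (i.e., f has the zero series as P-s-Gevrey asymptotic expansion), then there exists ρ > 0 such that f vanishes identically on Π ∩ D(0;ρ). -/

import Mathlib

open Set Complex

noncomputable section

/-- Open polydisk of radius `r` centered at `0` in `ℂ^d`. -/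
def polydisk (d : ℕ) (r : ℝ) : Set (Fin d → ℂ) :=
  {x | ∀ j, ‖x j‖ < r}

/-- The `P`-sector `Π_P(a,b;r)`. -/
def PSector (d : ℕ) (P : (Fin d → ℂ) → ℂ) (a b r : ℝ) : Set (Fin d → ℂ) :=
  {x | (∀ j, 0 < ‖x j‖ ∧ ‖x j‖ < r) ∧ P x ≠ 0 ∧
    ∃ θ ∈ Set.Ioo a b, P x = (‖P x‖ : ℂ) * Complex.exp (θ * Complex.I)}

/-!
Restrict to complex lines `t ↦ x + t • e` in a direction `e` along which `P` has an isolated zero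
at `0`. For `x` near `0` there are `r, δ > 0`, independent of `x`, with `‖P (x + t • e)‖ ≥ δ` on
the circle `‖t‖ = r` while `‖P x‖ < δ`. After a rotation and a dilation of the values of `P`, the
function `p t = P (x + t • e)` sends `t = 0` into the sector `|arg z| < π / (2 κ)`, `‖z‖ < 1`, for
some `κ` with `s κ < 1`.

The Gevrey estimates, taken at the orders `⌈κ n⌉` and summed against the exponential series, show
that `f` times `exp (l ‖P‖ ^ (-κ))` is bounded for every `l ≥ 0`. On the sector,
`Re (z ^ (-κ) - z ^ κ)` is positive and vanishes on the boundary away from `0`. The maximum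
principle for `f · exp (l (p ^ (-κ) - p ^ κ))` on the part of the disk `‖t‖ < r` mapped into the
sector thus gives, at `t = 0`, a bound independent of `l`, and `l → ∞` forces `f x = 0`. Multiplying
by `P` times the product of the coordinates makes the zeros of `P` and the coordinate hyperplanes
harmless boundary points.
-/

open Filter Metric

open scoped Real Topology

section GevreyFlatness

lemma pow_le_exp_rpow_mul_factorial_rpow {x b : ℝ} (hx : 0 ≤ x) (hb : 0 < b) (n : ℕ) :
    x ^ n ≤ Real.exp (x ^ (1 / b)) ^ b * (n.factorial : ℝ) ^ b := by
  have hpow : (x ^ (1 / b)) ^ n ≤ Real.exp (x ^ (1 / b)) * n.factorial :=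
    (div_le_iff₀ (by positivity)).1 (Real.pow_div_factorial_le_exp _ (by positivity) n)
  calc x ^ n = ((x ^ (1 / b)) ^ n) ^ b := by
        rw [← Real.rpow_natCast, ← Real.rpow_natCast, ← Real.rpow_mul hx, ← Real.rpow_mul hx]
        congr 1
        field_simp
    _ ≤ (Real.exp (x ^ (1 / b)) * n.factorial) ^ b :=
        Real.rpow_le_rpow (by positivity) hpow hb.le
    _ = _ := Real.mul_rpow (by positivity) (by positivity)

-- Log-convexity of `Γ` between `n + 1`, with weight `a`, and a point of a fixed compact interval.
lemma exists_Gamma_add_one_le_mul_factorial_rpow {a : ℝ} (ha : 0 < a) (ha1 : a < 1) (s : ℝ) :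
    ∃ C > 0, ∀ n : ℕ, ∀ x ∈ Icc (a * n) (a * n + s),
      Real.Gamma (x + 1) ≤ C * (n.factorial : ℝ) ^ a := by
  have hb : 0 < 1 - a := by linarith
  obtain ⟨G, hG⟩ : ∃ G, ∀ c ∈ Icc 1 (1 + s / (1 - a)), ‖Real.Gamma c‖ ≤ G :=
    isCompact_Icc.exists_bound_of_continuousOn <|
      Real.differentiableOn_Gamma_Ioi.continuousOn.mono fun c hc => one_pos.trans_le hc.1
  refine ⟨max G 1 ^ (1 - a), by positivity, fun n x hx => ?_⟩
  set c := 1 + (x - a * n) / (1 - a) with hc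
  have hc1 : 1 ≤ c := le_add_of_nonneg_right (div_nonneg (by linarith [hx.1]) hb.le)
  have hcG : Real.Gamma c ≤ max G 1 := by
    refine (Real.le_norm_self _).trans ((hG c ⟨hc1, ?_⟩).trans (le_max_left _ _))
    rw [hc]
    gcongr
    linarith [hx.2]
  have : 0 ≤ Real.Gamma c := (Real.Gamma_pos_of_pos (by linarith)).le
  calc Real.Gamma (x + 1) = Real.Gamma (a * (n + 1) + (1 - a) * c) := by
        rw [hc]
        field_simp
        ring_nf
    _ ≤ Real.Gamma (n + 1) ^ a * Real.Gamma c ^ (1 - a) :=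
        Real.Gamma_mul_add_mul_le_rpow_Gamma_mul_rpow_Gamma (by positivity) (by linarith) ha hb
          (by ring)
    _ ≤ max G 1 ^ (1 - a) * (n.factorial : ℝ) ^ a := by
        rw [Real.Gamma_nat_eq_factorial, mul_comm]
        gcongr

lemma pow_ceil_mul_le {A κ : ℝ} (hA : 1 ≤ A) (hκ : 0 ≤ κ) (n : ℕ) :
    A ^ ⌈κ * n⌉₊ ≤ A * (A ^ κ) ^ n := by
  have hA0 : 0 < A := one_pos.trans_le hA
  calc A ^ ⌈κ * n⌉₊ = A ^ (⌈κ * n⌉₊ : ℝ) := (Real.rpow_natCast _ _).symm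
    _ ≤ A ^ (1 + κ * n) := Real.rpow_le_rpow_of_exponent_le hA <| by
        linarith [Nat.ceil_lt_add_one (by positivity : 0 ≤ κ * n)]
    _ = A * (A ^ κ) ^ n := by
        rw [Real.rpow_add hA0, Real.rpow_one, Real.rpow_mul hA0.le, Real.rpow_natCast]

lemma pow_ceil_mul_mul_rpow_neg_pow_le_one {ρ : ℝ} (hρ : 0 < ρ) (hρ1 : ρ ≤ 1) (κ : ℝ) (n : ℕ) :
    ρ ^ ⌈κ * n⌉₊ * (ρ ^ (-κ)) ^ n ≤ 1 := by
  rw [← Real.rpow_natCast, ← Real.rpow_natCast, ← Real.rpow_mul hρ.le, ← Real.rpow_add hρ]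
  exact Real.rpow_le_one hρ.le hρ1 (by linarith [Nat.le_ceil (κ * n)])

variable {s κ K A l : ℝ}

-- The Gevrey estimate of order `N = ⌈κ n⌉` controls the `n`-th term of the exponential series.
lemma exists_mul_pow_div_factorial_le_of_gevrey (hs : 0 < s) (hκ : 0 < κ) (hsκ : s * κ < 1)
    (hK : 0 ≤ K) (hA : 0 ≤ A) (hl : 0 ≤ l) :
    ∃ M, ∀ y ρ : ℝ, 0 < ρ → ρ ≤ 1 →
      (∀ N : ℕ, y ≤ K * A ^ N * Real.Gamma (s * N + 1) * ρ ^ N) →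
      ∀ n : ℕ, y * ((l * ρ ^ (-κ)) ^ n / n.factorial) ≤ M * (1 / 2) ^ n := by
  obtain ⟨C, hC, hΓ⟩ := exists_Gamma_add_one_le_mul_factorial_rpow (by positivity) hsκ s
  set A' := max A 1
  set x := 2 * l * A' ^ κ with hx
  set E := Real.exp (x ^ (1 / (1 - s * κ))) ^ (1 - s * κ)
  refine ⟨K * A' * C * E, fun y ρ hρ hρ1 hy n => ?_⟩
  set N := ⌈κ * n⌉₊
  have hAN : A ^ N ≤ A' * (A' ^ κ) ^ n :=
    (pow_le_pow_left₀ hA (le_max_left _ _) N).trans (pow_ceil_mul_le (le_max_right _ _) hκ.le n)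
  have hΓN : Real.Gamma (s * N + 1) ≤ C * (n.factorial : ℝ) ^ (s * κ) := by
    refine hΓ n _ ⟨?_, ?_⟩
    · nlinarith [Nat.le_ceil (κ * n)]
    · nlinarith [Nat.ceil_lt_add_one (by positivity : 0 ≤ κ * n)]
  have : 0 ≤ Real.Gamma (s * N + 1) := (Real.Gamma_pos_of_pos (by positivity)).le
  rw [mul_div_assoc', div_le_iff₀ (by positivity)]
  calc y * (l * ρ ^ (-κ)) ^ n
      ≤ (K * A ^ N * Real.Gamma (s * N + 1) * ρ ^ N) * (l * ρ ^ (-κ)) ^ n := by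
        gcongr
        exact hy N
    _ = K * A ^ N * Real.Gamma (s * N + 1) * l ^ n * (ρ ^ N * (ρ ^ (-κ)) ^ n) := by ring
    _ ≤ K * (A' * (A' ^ κ) ^ n) * (C * (n.factorial : ℝ) ^ (s * κ)) * l ^ n * 1 := by
        gcongr
        exact pow_ceil_mul_mul_rpow_neg_pow_le_one hρ hρ1 κ n
    _ = K * A' * C * (n.factorial : ℝ) ^ (s * κ) * (1 / 2) ^ n * x ^ n := by
        rw [hx, mul_pow, mul_pow, div_pow, one_pow]
        field_simp
    _ ≤ K * A' * C * (n.factorial : ℝ) ^ (s * κ) * (1 / 2) ^ n *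
          (E * (n.factorial : ℝ) ^ (1 - s * κ)) := by
        gcongr
        exact pow_le_exp_rpow_mul_factorial_rpow (by positivity) (by linarith) n
    _ = K * A' * C * E * (1 / 2) ^ n *
          ((n.factorial : ℝ) ^ (s * κ) * (n.factorial : ℝ) ^ (1 - s * κ)) := by ring
    _ = K * A' * C * E * (1 / 2) ^ n * n.factorial := by
        rw [← Real.rpow_add (by positivity), add_sub_cancel, Real.rpow_one]

lemma exists_mul_exp_rpow_neg_le_of_gevrey (hs : 0 < s) (hκ : 0 < κ) (hsκ : s * κ < 1)
    (hK : 0 ≤ K) (hA : 0 ≤ A) (hl : 0 ≤ l) :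
    ∃ M, ∀ y ρ : ℝ, 0 < ρ → ρ ≤ 1 →
      (∀ N : ℕ, y ≤ K * A ^ N * Real.Gamma (s * N + 1) * ρ ^ N) →
      y * Real.exp (l * ρ ^ (-κ)) ≤ M := by
  obtain ⟨M, hM⟩ := exists_mul_pow_div_factorial_le_of_gevrey hs hκ hsκ hK hA hl
  refine ⟨M * 2, fun y ρ hρ hρ1 hy => ?_⟩
  have hexp : HasSum (fun n : ℕ => (l * ρ ^ (-κ)) ^ n / n.factorial)
      (Real.exp (l * ρ ^ (-κ))) := by
    rw [Real.exp_eq_exp_ℝ]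
    exact NormedSpace.expSeries_div_hasSum_exp _
  exact hasSum_le (hM y ρ hρ hρ1 hy) (hexp.mul_left y) (hasSum_geometric_two.mul_left M)

end GevreyFlatness

section Sectors

lemma abs_arg_le_iff_norm_mul_cos_le_re {z : ℂ} {β : ℝ} (hz : z ≠ 0) (hβ : β ∈ Icc 0 π) :
    |arg z| ≤ β ↔ ‖z‖ * Real.cos β ≤ z.re := by
  rw [← norm_mul_cos_arg z, mul_le_mul_iff_right₀ (norm_pos_iff.2 hz), ← Real.cos_abs (arg z),
    Real.strictAntiOn_cos.le_iff_ge hβ ⟨abs_nonneg _, abs_arg_le_pi z⟩]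

lemma abs_arg_lt_iff_norm_mul_cos_lt_re {z : ℂ} {β : ℝ} (hz : z ≠ 0) (hβ : β ∈ Icc 0 π) :
    |arg z| < β ↔ ‖z‖ * Real.cos β < z.re := by
  rw [← norm_mul_cos_arg z, mul_lt_mul_iff_right₀ (norm_pos_iff.2 hz), ← Real.cos_abs (arg z),
    Real.strictAntiOn_cos.lt_iff_gt hβ ⟨abs_nonneg _, abs_arg_le_pi z⟩]

/-- The open sector of directions `(a, b)` with vertex `0` and infinite radius. -/
def angularSector (a b : ℝ) : Set ℂ :=
  {z | z ≠ 0 ∧ ∃ θ ∈ Ioo a b, z = ‖z‖ * exp (θ * I)}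

lemma mem_angularSector_iff_abs_arg_lt {a b : ℝ} (hab : b ≤ a + 2 * π) {z : ℂ} :
    z ∈ angularSector a b ↔
      z ≠ 0 ∧ |arg (exp (-((a + b) / 2 : ℝ) * I) * z)| < (b - a) / 2 := by
  refine and_congr_right fun hz => ⟨?_, fun h => ?_⟩
  · rintro ⟨θ, ⟨haθ, hθb⟩, hzθ⟩
    have hrot : exp (-((a + b) / 2 : ℝ) * I) * z =
        ‖z‖ * exp ((θ - (a + b) / 2 : ℝ) * I) := by
      rw [hzθ, norm_mul, norm_exp_ofReal_mul_I, mul_one, norm_real, norm_norm, mul_left_comm,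
        ← exp_add]
      congr 2
      push_cast
      ring
    rw [hrot, exp_mul_I, arg_mul_cos_add_sin_mul_I (norm_pos_iff.2 hz) ⟨by linarith, by linarith⟩,
      abs_lt]
    constructor <;> linarith
  · obtain ⟨hlow, hhigh⟩ := abs_lt.1 h
    refine ⟨(a + b) / 2 + arg (exp (-((a + b) / 2 : ℝ) * I) * z),
      ⟨by linarith, by linarith⟩, ?_⟩
    have hpolar := norm_mul_exp_arg_mul_I (exp (-((a + b) / 2 : ℝ) * I) * z)
    rw [norm_mul, ← ofReal_neg, norm_exp_ofReal_mul_I, one_mul, ofReal_neg] at hpolar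
    rw [ofReal_add, add_mul, exp_add, mul_left_comm, hpolar, ← mul_assoc, ← exp_add, neg_mul,
      add_neg_cancel, exp_zero, one_mul]

/-- The sector of radius `1` bisected by the positive real axis, of opening `π / κ`; for
`κ > 1 / 2` its closure avoids the negative real axis. -/
def unitSector (κ : ℝ) : Set ℂ :=
  {z | z ≠ 0 ∧ ‖z‖ < 1 ∧ |arg z| < π / (2 * κ)}

variable {κ : ℝ} {z : ℂ}

lemma pi_div_two_mul_lt_pi (hκ : 1 / 2 < κ) : π / (2 * κ) < π :=
  div_lt_self Real.pi_pos (by linarith)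

lemma pi_div_two_mul_mem_Icc (hκ : 1 / 2 < κ) : π / (2 * κ) ∈ Icc 0 π :=
  ⟨div_nonneg Real.pi_pos.le (by linarith), (pi_div_two_mul_lt_pi hκ).le⟩

lemma unitSector_eq (hκ : 1 / 2 < κ) :
    unitSector κ = {z | z ≠ 0 ∧ ‖z‖ < 1 ∧ ‖z‖ * Real.cos (π / (2 * κ)) < z.re} := by
  ext z
  exact and_congr_right fun hz => and_congr_right fun _ =>
    abs_arg_lt_iff_norm_mul_cos_lt_re hz (pi_div_two_mul_mem_Icc hκ)

lemma isOpen_unitSector (hκ : 1 / 2 < κ) : IsOpen (unitSector κ) := by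
  rw [unitSector_eq hκ]
  exact isOpen_ne.inter ((isOpen_lt continuous_norm continuous_const).inter
    (isOpen_lt (continuous_norm.mul continuous_const) continuous_re))

lemma norm_le_one_and_abs_arg_le_of_mem_closure_unitSector (hκ : 1 / 2 < κ) (hz : z ≠ 0)
    (hzκ : z ∈ closure (unitSector κ)) : ‖z‖ ≤ 1 ∧ |arg z| ≤ π / (2 * κ) := by
  have hclosed : IsClosed {z : ℂ | ‖z‖ ≤ 1 ∧ ‖z‖ * Real.cos (π / (2 * κ)) ≤ z.re} :=
    (isClosed_le continuous_norm continuous_const).inter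
      (isClosed_le (continuous_norm.mul continuous_const) continuous_re)
  rw [unitSector_eq hκ] at hzκ
  obtain ⟨hz1, hzre⟩ := hclosed.closure_subset_iff.2 (fun _ hu => ⟨hu.2.1.le, hu.2.2.le⟩) hzκ
  exact ⟨hz1, (abs_arg_le_iff_norm_mul_cos_le_re hz (pi_div_two_mul_mem_Icc hκ)).2 hzre⟩

lemma mem_slitPlane_of_mem_closure_unitSector (hκ : 1 / 2 < κ) (hz : z ≠ 0)
    (hzκ : z ∈ closure (unitSector κ)) : z ∈ slitPlane := by
  refine mem_slitPlane_iff_arg.2 ⟨fun harg => ?_, hz⟩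
  have harg_le := (norm_le_one_and_abs_arg_le_of_mem_closure_unitSector hκ hz hzκ).2
  rw [harg, abs_of_pos Real.pi_pos] at harg_le
  exact harg_le.not_gt (pi_div_two_mul_lt_pi hκ)

/-- The barrier function for the maximum principle on `unitSector κ`: its real part is positive on
the sector and vanishes on the boundary away from `0`. -/
def sectorBarrier (κ : ℝ) (z : ℂ) : ℂ :=
  z ^ (-κ : ℂ) - z ^ (κ : ℂ)

lemma sectorBarrier_re (κ : ℝ) (z : ℂ) :
    (sectorBarrier κ z).re = (‖z‖ ^ (-κ) - ‖z‖ ^ κ) * Real.cos (arg z * κ) := by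
  rw [sectorBarrier, sub_re, ← ofReal_neg, cpow_ofReal_re, cpow_ofReal_re, mul_neg, Real.cos_neg]
  ring

lemma differentiableOn_sectorBarrier (hκ : 1 / 2 < κ) :
    DifferentiableOn ℂ (sectorBarrier κ) (closure (unitSector κ) \ {0}) := by
  have hslit : ∀ z ∈ closure (unitSector κ) \ {0}, z ∈ slitPlane :=
    fun z hz => mem_slitPlane_of_mem_closure_unitSector hκ hz.2 hz.1
  exact (differentiableOn_id.cpow_const hslit).sub (differentiableOn_id.cpow_const hslit)

lemma sectorBarrier_re_le (hκ : 0 ≤ κ) (hz : z ≠ 0) (hz1 : ‖z‖ ≤ 1) :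
    (sectorBarrier κ z).re ≤ ‖z‖ ^ (-κ) := by
  have hz0 : 0 < ‖z‖ := norm_pos_iff.2 hz
  have hnonneg : 0 ≤ ‖z‖ ^ (-κ) - ‖z‖ ^ κ :=
    sub_nonneg.2 (Real.rpow_le_rpow_of_exponent_ge hz0 hz1 (by linarith))
  calc (sectorBarrier κ z).re = (‖z‖ ^ (-κ) - ‖z‖ ^ κ) * Real.cos (arg z * κ) :=
        sectorBarrier_re κ z
    _ ≤ ‖z‖ ^ (-κ) - ‖z‖ ^ κ := mul_le_of_le_one_right hnonneg (Real.cos_le_one _)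
    _ ≤ ‖z‖ ^ (-κ) := sub_le_self _ (by positivity)

lemma sectorBarrier_re_pos (hκ : 0 < κ) (hz : z ∈ unitSector κ) : 0 < (sectorBarrier κ z).re := by
  obtain ⟨hz0, hz1, harg⟩ := hz
  rw [sectorBarrier_re]
  refine mul_pos (sub_pos.2 ?_) (Real.cos_pos_of_mem_Ioo (abs_lt.1 ?_))
  · exact Real.rpow_lt_rpow_of_exponent_gt (norm_pos_iff.2 hz0) hz1 (by linarith)
  · rw [abs_mul, abs_of_pos hκ, ← lt_div_iff₀ hκ, div_div]
    exact harg

lemma sectorBarrier_re_eq_zero_of_mem_frontier (hκ : 1 / 2 < κ) (hz : z ≠ 0)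
    (hzκ : z ∈ frontier (unitSector κ)) : (sectorBarrier κ z).re = 0 := by
  rw [(isOpen_unitSector hκ).frontier_eq] at hzκ
  obtain ⟨hz1, harg⟩ := norm_le_one_and_abs_arg_le_of_mem_closure_unitSector hκ hz hzκ.1
  rw [sectorBarrier_re]
  rcases hz1.eq_or_lt with hz1 | hz1
  · simp [hz1]
  · have harg_eq : |arg z| = π / (2 * κ) :=
      harg.antisymm (not_lt.1 fun h => hzκ.2 ⟨hz, hz1, h⟩)
    have hκ0 : 0 < κ := by linarith
    have hcos : |arg z * κ| = π / 2 := by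
      rw [abs_mul, harg_eq, abs_of_pos hκ0]
      field_simp
    rw [← Real.cos_abs, hcos, Real.cos_pi_div_two, mul_zero]

lemma norm_exp_mul_sectorBarrier_smul {F : Type*} [NormedAddCommGroup F] [NormedSpace ℂ F]
    (l κ : ℝ) (z : ℂ) (v : F) :
    ‖exp (l * sectorBarrier κ z) • v‖ = ‖v‖ * Real.exp (l * (sectorBarrier κ z).re) := by
  rw [norm_smul, norm_exp, re_ofReal_mul, mul_comm]

/-- The similarity which turns the bisector of the directions `(a, b)` into the positive real axis
and the circle of radius `δ` into the unit circle. -/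
def sectorNormalization (a b δ : ℝ) (z : ℂ) : ℂ :=
  (δ⁻¹ : ℝ) * (exp (-((a + b) / 2 : ℝ) * I) * z)

variable {s a b δ : ℝ}

lemma mul_norm_sectorNormalization (hδ : 0 < δ) : δ * ‖sectorNormalization a b δ z‖ = ‖z‖ := by
  rw [sectorNormalization, norm_mul, norm_mul, ← ofReal_neg, norm_exp_ofReal_mul_I, one_mul,
    norm_real, Real.norm_of_nonneg (inv_nonneg.2 hδ.le), mul_inv_cancel_left₀ hδ.ne']

lemma sectorNormalization_ne_zero (hδ : 0 < δ) (hz : z ≠ 0) : sectorNormalization a b δ z ≠ 0 :=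
  mul_ne_zero (ofReal_ne_zero.2 (inv_ne_zero hδ.ne')) (mul_ne_zero (exp_ne_zero _) hz)

lemma differentiable_sectorNormalization : Differentiable ℂ (sectorNormalization a b δ) :=
  (differentiable_id.const_mul _).const_mul _

lemma arg_sectorNormalization (hδ : 0 < δ) :
    arg (sectorNormalization a b δ z) = arg (exp (-((a + b) / 2 : ℝ) * I) * z) :=
  arg_real_mul _ (inv_pos.2 hδ)

lemma mem_angularSector_of_sectorNormalization_mem_closure (hκ : 1 / 2 < κ)
    (hab : b ≤ a + 2 * π) (hκab : π / (2 * κ) < (b - a) / 2) (hδ : 0 < δ) (hz : z ≠ 0)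
    (hzκ : sectorNormalization a b δ z ∈ closure (unitSector κ)) : z ∈ angularSector a b := by
  have harg := (norm_le_one_and_abs_arg_le_of_mem_closure_unitSector hκ
    (sectorNormalization_ne_zero hδ hz) hzκ).2
  rw [arg_sectorNormalization hδ] at harg
  exact (mem_angularSector_iff_abs_arg_lt hab).2 ⟨hz, harg.trans_lt hκab⟩

lemma exists_sectorNormalization_mem_unitSector (hs : 0 < s) (hab : b ≤ a + 2 * π)
    (hopen : s * π < b - a) (hz : z ∈ angularSector a b) (hzδ : ‖z‖ < δ) :
    ∃ κ > 1 / 2, s * κ < 1 ∧ π / (2 * κ) < (b - a) / 2 ∧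
      sectorNormalization a b δ z ∈ unitSector κ := by
  obtain ⟨hz0, harg⟩ := (mem_angularSector_iff_abs_arg_lt hab).1 hz
  have hδ : 0 < δ := (norm_nonneg z).trans_lt hzδ
  obtain ⟨β, hβ, hβab⟩ := exists_between (max_lt (by linarith : s * π / 2 < (b - a) / 2) harg)
  obtain ⟨hsβ, hzβ⟩ := max_lt_iff.1 hβ
  have hπ := Real.pi_pos
  have hβ0 : 0 < β := lt_trans (by positivity) hsβ
  have hβκ : π / (2 * (π / (2 * β))) = β := by field_simp
  refine ⟨π / (2 * β), ?_, ?_, by rwa [hβκ], sectorNormalization_ne_zero hδ hz0, ?_, ?_⟩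
  · rw [gt_iff_lt, div_lt_div_iff₀ two_pos (by positivity)]
    linarith
  · rw [mul_div_assoc', div_lt_one (by positivity)]
    linarith
  · rwa [← mul_norm_sectorNormalization (a := a) (b := b) hδ, mul_lt_iff_lt_one_right hδ] at hzδ
  · rwa [hβκ, arg_sectorNormalization hδ]

end Sectors

section MaximumPrinciple

lemma continuousOn_smul_of_norm_le {X 𝕜 F : Type*} [TopologicalSpace X] [NormedField 𝕜]
    [SeminormedAddCommGroup F] [NormedSpace 𝕜 F] {S : Set X} {w : X → 𝕜} {g : X → F} {M : ℝ}
    (hw : ContinuousOn w S) (hg : ContinuousOn g {x ∈ S | w x ≠ 0})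
    (hM : ∀ x ∈ S, w x ≠ 0 → ‖g x‖ ≤ M) : ContinuousOn (fun x => w x • g x) S := by
  intro x hx
  by_cases hwx : w x = 0
  · have hbound : ∀ᶠ u in 𝓝[S] x, ‖w u • g u‖ ≤ ‖w u‖ * M := by
      filter_upwards [self_mem_nhdsWithin] with u hu
      rw [norm_smul]
      by_cases hwu : w u = 0
      · simp [hwu]
      · exact mul_le_mul_of_nonneg_left (hM u hu hwu) (norm_nonneg _)
    have hlim : Tendsto (fun u => ‖w u‖ * M) (𝓝[S] x) (𝓝 0) := by
      have hcont : ContinuousWithinAt (fun u => ‖w u‖ * M) S x := (hw x hx).norm.mul_const M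
      simpa [ContinuousWithinAt, hwx] using hcont
    simpa [ContinuousWithinAt, hwx] using squeeze_zero_norm' hbound hlim
  · have hne : {u ∈ S | w u ≠ 0} ∈ 𝓝[S] x :=
      inter_mem self_mem_nhdsWithin ((hw x hx).eventually_ne hwx)
    exact (hw x hx).smul ((hg x ⟨hx, hwx⟩).mono_of_mem_nhdsWithin hne)

variable {E F : Type*} [NormedAddCommGroup E] [NormedSpace ℂ E] [Nontrivial E]
  [NormedAddCommGroup F] [NormedSpace ℂ F]

lemma norm_smul_le_of_forall_mem_frontier {V : Set E} {w : E → ℂ} {g : E → F} {C M : ℝ}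
    (hV : Bornology.IsBounded V) (hw : DiffContOnCl ℂ w V) (hg : DifferentiableOn ℂ g V)
    (hgc : ContinuousOn g {x ∈ closure V | w x ≠ 0})
    (hM : ∀ x ∈ closure V, w x ≠ 0 → ‖g x‖ ≤ M) (hC : 0 ≤ C)
    (hfr : ∀ x ∈ frontier V, w x ≠ 0 → ‖w x • g x‖ ≤ C) {x : E} (hx : x ∈ closure V) :
    ‖w x • g x‖ ≤ C := by
  have hdiff : DiffContOnCl ℂ (fun x => w x • g x) V :=
    ⟨hw.differentiableOn.smul hg, continuousOn_smul_of_norm_le hw.continuousOn hgc hM⟩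
  refine norm_le_of_forall_mem_frontier_norm_le hV hdiff (fun u hu => ?_) hx
  by_cases hwu : w u = 0
  · simpa [hwu] using hC
  · exact hfr u hu hwu

end MaximumPrinciple

lemma nonpos_of_forall_mul_exp_le {b c C : ℝ} (hb : 0 < b)
    (h : ∀ l ≥ 0, c * Real.exp (l * b) ≤ C) : c ≤ 0 := by
  by_contra! hc
  have hlim : Tendsto (fun l : ℝ => c * Real.exp (l * b)) atTop atTop :=
    (Real.tendsto_exp_atTop.comp (tendsto_id.atTop_mul_const hb)).const_mul_atTop hc
  obtain ⟨l, hCl, hl⟩ := ((hlim.eventually_gt_atTop C).and (eventually_ge_atTop 0)).exists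
  exact (h l hl).not_gt hCl

section OneVariable

variable {F : Type*} [NormedAddCommGroup F] [NormedSpace ℂ F] {D : Set ℂ} {p w : ℂ → ℂ}
  {g : ℂ → F} {κ : ℝ}

/-- The part of `D` which `p` maps into `unitSector κ`, with the zeros of `w` removed. -/
def sectorRegion (D : Set ℂ) (p w : ℂ → ℂ) (κ : ℝ) : Set ℂ :=
  {t ∈ D | w t ≠ 0 ∧ p t ∈ unitSector κ}

/-- A closed counterpart of `sectorRegion`: the points of `closure D` which `p` maps into the
closure of `unitSector κ`, with the zeros of `w` removed. -/
def closedSectorRegion (D : Set ℂ) (p w : ℂ → ℂ) (κ : ℝ) : Set ℂ :=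
  {t ∈ closure D | w t ≠ 0 ∧ p t ∈ closure (unitSector κ)}

lemma sectorRegion_subset_closedSectorRegion :
    sectorRegion D p w κ ⊆ closedSectorRegion D p w κ :=
  fun _ ht => ⟨subset_closure ht.1, ht.2.1, subset_closure ht.2.2⟩

lemma closure_sectorRegion_subset : closure (sectorRegion D p w κ) ⊆ closure D :=
  closure_mono fun _ ht => ht.1

lemma isOpen_sectorRegion (hκ : 1 / 2 < κ) (hD : IsOpen D) (hp : ContinuousOn p D)
    (hw : ContinuousOn w D) : IsOpen (sectorRegion D p w κ) := by
  have hwp : IsOpen (D ∩ (fun t => (w t, p t)) ⁻¹' ({0}ᶜ ×ˢ unitSector κ)) :=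
    (hw.prodMk hp).isOpen_inter_preimage hD (isOpen_compl_singleton.prod (isOpen_unitSector hκ))
  exact hwp

lemma mem_closedSectorRegion_of_mem_closure (hp : ContinuousOn p (closure D)) {t : ℂ}
    (ht : t ∈ closure (sectorRegion D p w κ)) (hwt : w t ≠ 0) :
    t ∈ closedSectorRegion D p w κ := by
  have hmaps : MapsTo p (sectorRegion D p w κ) (unitSector κ) := fun _ hu => hu.2.2
  exact ⟨closure_sectorRegion_subset ht, hwt,
    hmaps.closure_of_continuousOn (hp.mono closure_sectorRegion_subset) ht⟩

lemma mem_frontier_unitSector_of_mem_frontier (hκ : 1 / 2 < κ) (hD : IsOpen D)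
    (hp : DiffContOnCl ℂ p D) (hw : DiffContOnCl ℂ w D) (hpD : ∀ t ∈ frontier D, 1 ≤ ‖p t‖)
    {t : ℂ} (ht : t ∈ frontier (sectorRegion D p w κ)) (hwt : w t ≠ 0) :
    p t ∈ frontier (unitSector κ) := by
  have hopen := isOpen_sectorRegion hκ hD hp.differentiableOn.continuousOn
    hw.differentiableOn.continuousOn
  rw [hopen.frontier_eq] at ht
  obtain ⟨htD, -, hpt⟩ := mem_closedSectorRegion_of_mem_closure hp.continuousOn ht.1 hwt
  rw [(isOpen_unitSector hκ).frontier_eq]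
  refine ⟨hpt, fun hpt' => ht.2 ⟨?_, hwt, hpt'⟩⟩
  by_contra htD'
  have htfr : t ∈ frontier D := by
    rw [hD.frontier_eq]
    exact ⟨htD, htD'⟩
  exact (hpD t htfr).not_gt hpt'.2.1

-- The maximum principle for `w • exp (l * sectorBarrier κ ∘ p) • g`: the exponential has modulus
-- `1` on the boundary, and `w` kills the points where `g` or the barrier is singular.
lemma norm_mul_norm_mul_exp_le_of_mem_sectorRegion {l C M : ℝ} (hκ : 1 / 2 < κ) (hD : IsOpen D)
    (hDb : Bornology.IsBounded D) (hp : DiffContOnCl ℂ p D) (hw : DiffContOnCl ℂ w D)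
    (hpw : ∀ t ∈ closure D, w t ≠ 0 → p t ≠ 0) (hpD : ∀ t ∈ frontier D, 1 ≤ ‖p t‖)
    (hg : DifferentiableOn ℂ g (closedSectorRegion D p w κ)) (hl : 0 ≤ l)
    (hM : ∀ t ∈ closedSectorRegion D p w κ, ‖g t‖ * Real.exp (l * ‖p t‖ ^ (-κ)) ≤ M)
    (hC : ∀ t ∈ closedSectorRegion D p w κ, ‖w t‖ * ‖g t‖ ≤ C) {t : ℂ}
    (ht : t ∈ sectorRegion D p w κ) :
    ‖w t‖ * ‖g t‖ * Real.exp (l * (sectorBarrier κ (p t)).re) ≤ C := by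
  set G : ℂ → F := fun t => exp (l * sectorBarrier κ (p t)) • g t
  have hGnorm (u : ℂ) : ‖G u‖ = ‖g u‖ * Real.exp (l * (sectorBarrier κ (p u)).re) :=
    norm_exp_mul_sectorBarrier_smul l κ (p u) (g u)
  have hsub : sectorRegion D p w κ ⊆ closedSectorRegion D p w κ :=
    sectorRegion_subset_closedSectorRegion
  have hmaps : MapsTo p (closedSectorRegion D p w κ) (closure (unitSector κ) \ {0}) :=
    fun u hu => ⟨hu.2.2, hpw u hu.1 hu.2.1⟩
  have hbarrier := differentiableOn_sectorBarrier hκ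
  have hGdiff : DifferentiableOn ℂ G (sectorRegion D p w κ) := by
    have hcomp := hbarrier.comp (hp.differentiableOn.mono fun _ hu => hu.1) (hmaps.mono_left hsub)
    exact (hcomp.const_mul _).cexp.smul (hg.mono hsub)
  have hGcont : ContinuousOn G (closedSectorRegion D p w κ) := by
    have hcomp := hbarrier.continuousOn.comp (hp.continuousOn.mono fun _ hu => hu.1) hmaps
    exact (continuousOn_const.mul hcomp).cexp.smul hg.continuousOn
  have hcl {u : ℂ} (hu : u ∈ closure (sectorRegion D p w κ)) (hwu : w u ≠ 0) :
      u ∈ closedSectorRegion D p w κ := mem_closedSectorRegion_of_mem_closure hp.continuousOn hu hwu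
  have hGM (u : ℂ) (hu : u ∈ closure (sectorRegion D p w κ)) (hwu : w u ≠ 0) : ‖G u‖ ≤ M := by
    obtain ⟨hpu, hpu0⟩ := hmaps (hcl hu hwu)
    have hpu1 := (norm_le_one_and_abs_arg_le_of_mem_closure_unitSector hκ hpu0 hpu).1
    refine le_trans ?_ (hM u (hcl hu hwu))
    rw [hGnorm]
    gcongr
    exact sectorBarrier_re_le (by linarith) hpu0 hpu1
  have hGfr (u : ℂ) (hu : u ∈ frontier (sectorRegion D p w κ)) (hwu : w u ≠ 0) :
      ‖w u • G u‖ ≤ C := by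
    have hu' := hcl (frontier_subset_closure hu) hwu
    rw [norm_smul, hGnorm, sectorBarrier_re_eq_zero_of_mem_frontier hκ (hmaps hu').2
      (mem_frontier_unitSector_of_mem_frontier hκ hD hp hw hpD hu hwu), mul_zero, Real.exp_zero,
      mul_one]
    exact hC u hu'
  have hC0 : 0 ≤ C := le_trans (by positivity) (hC t (hsub ht))
  have hle := norm_smul_le_of_forall_mem_frontier (hDb.subset fun _ hu => hu.1)
    (hw.mono fun _ hu => hu.1) hGdiff (hGcont.mono fun _ hu => hcl hu.1 hu.2) hGM hC0 hGfr
    (subset_closure ht)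
  rwa [norm_smul, hGnorm, ← mul_assoc] at hle

lemma eq_zero_of_flat_of_mem_sectorRegion (hκ : 1 / 2 < κ) (hD : IsOpen D)
    (hDb : Bornology.IsBounded D) (hp : DiffContOnCl ℂ p D) (hw : DiffContOnCl ℂ w D)
    (hpw : ∀ t ∈ closure D, w t ≠ 0 → p t ≠ 0) (hpD : ∀ t ∈ frontier D, 1 ≤ ‖p t‖)
    (hg : DifferentiableOn ℂ g (closedSectorRegion D p w κ))
    (hflat : ∀ l ≥ 0, ∃ M, ∀ t ∈ closedSectorRegion D p w κ,
      ‖g t‖ * Real.exp (l * ‖p t‖ ^ (-κ)) ≤ M) {t : ℂ} (ht : t ∈ sectorRegion D p w κ) :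
    g t = 0 := by
  obtain ⟨B, hB⟩ := hDb.isCompact_closure.exists_bound_of_continuousOn hw.continuousOn
  obtain ⟨K, hK⟩ := hflat 0 le_rfl
  have hBK : ∀ u ∈ closedSectorRegion D p w κ, ‖w u‖ * ‖g u‖ ≤ B * K := fun u hu =>
    mul_le_mul (hB u hu.1) (by simpa using hK u hu) (norm_nonneg _)
      ((norm_nonneg _).trans (hB u hu.1))
  have hnonpos : ‖w t‖ * ‖g t‖ ≤ 0 := by
    refine nonpos_of_forall_mul_exp_le (sectorBarrier_re_pos (by linarith) ht.2.2)
      (C := B * K) fun l hl => ?_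
    obtain ⟨M, hM⟩ := hflat l hl
    exact norm_mul_norm_mul_exp_le_of_mem_sectorRegion hκ hD hDb hp hw hpw hpD hg hl hM hBK ht
  rw [← norm_le_zero_iff]
  exact nonpos_of_mul_nonpos_right hnonpos (norm_pos_iff.2 ht.2.1)

theorem eq_zero_of_gevrey_of_mem_sectorRegion {s K A : ℝ} (hs : 0 < s) (hκ : 1 / 2 < κ)
    (hsκ : s * κ < 1) (hD : IsOpen D) (hDb : Bornology.IsBounded D) (hp : DiffContOnCl ℂ p D)
    (hw : DiffContOnCl ℂ w D) (hpw : ∀ t ∈ closure D, w t ≠ 0 → p t ≠ 0)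
    (hpD : ∀ t ∈ frontier D, 1 ≤ ‖p t‖)
    (hg : DifferentiableOn ℂ g (closedSectorRegion D p w κ)) (hA : 0 ≤ A)
    (hest : ∀ N : ℕ, ∀ t ∈ closedSectorRegion D p w κ,
      ‖g t‖ ≤ K * A ^ N * Real.Gamma (s * N + 1) * ‖p t‖ ^ N)
    {t : ℂ} (ht : t ∈ sectorRegion D p w κ) : g t = 0 := by
  have hK : 0 ≤ K := by
    simpa using (norm_nonneg _).trans (hest 0 t (sectorRegion_subset_closedSectorRegion ht))
  refine eq_zero_of_flat_of_mem_sectorRegion hκ hD hDb hp hw hpw hpD hg (fun l hl => ?_) ht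
  obtain ⟨M, hM⟩ := exists_mul_exp_rpow_neg_le_of_gevrey hs (by linarith) hsκ hK hA hl
  refine ⟨M, fun u hu => ?_⟩
  have hpu := hpw u hu.1 hu.2.1
  exact hM _ _ (norm_pos_iff.2 hpu)
    (norm_le_one_and_abs_arg_le_of_mem_closure_unitSector hκ hpu hu.2.2).1 fun N => hest N u hu

end OneVariable

section Slices

variable {E F : Type*} [NormedAddCommGroup E] [NormedSpace ℂ E] [NormedAddCommGroup F]
  [NormedSpace ℂ F] {P Q : E → ℂ} {f : E → F} {R s a b K A : ℝ}

lemma exists_sphere_forall_apply_smul_ne_zero (hP : DifferentiableOn ℂ P (ball 0 R)) {e : E}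
    (he : e ∈ ball 0 R) (hPe : P e ≠ 0) :
    ∃ r ∈ Ioo (0 : ℝ) 1, ∀ t ∈ sphere (0 : ℂ) r, P (t • e) ≠ 0 := by
  have hR : 0 < R := nonempty_ball.1 ⟨e, he⟩
  let line : ℂ →L[ℂ] E := .toSpanSingleton ℂ e
  have hopen : IsOpen (line ⁻¹' ball 0 R) := isOpen_ball.preimage line.continuous
  have hconvex : Convex ℝ (line ⁻¹' ball 0 R) :=
    (convex_ball 0 R).linear_preimage (line.toLinearMap.restrictScalars ℝ)
  have hanalytic : AnalyticOnNhd ℂ (P ∘ line) (line ⁻¹' ball 0 R) :=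
    (hP.comp line.differentiableOn (mapsTo_preimage _ _)).analyticOnNhd hopen
  have hne : ∀ᶠ t in 𝓝[≠] (0 : ℂ), (P ∘ line) t ≠ 0 := by
    by_contra hzero
    have hline := hanalytic.eqOn_zero_of_preconnected_of_frequently_eq_zero
      hconvex.isPreconnected (z₀ := 0) (by simpa using hR) (by simpa using hzero)
    exact hPe (by simpa [line] using hline (x := 1) (by simpa [line] using he))
  obtain ⟨ε, hε, hball⟩ := Metric.eventually_nhds_iff.1 (eventually_nhdsWithin_iff.1 hne)
  obtain ⟨r, hr0, hr⟩ := exists_between (lt_min hε one_pos)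
  refine ⟨r, ⟨hr0, hr.trans_le (min_le_right _ _)⟩, fun t ht => ?_⟩
  exact hball ((mem_sphere.1 ht).trans_lt (hr.trans_le (min_le_left _ _)))
    (ne_of_mem_sphere ht hr0.ne')

lemma exists_pos_eventually_forall_sphere_le_norm {e : E} {r : ℝ}
    (hP : ∀ t ∈ sphere (0 : ℂ) r, ContinuousAt P (t • e))
    (hne : ∀ t ∈ sphere (0 : ℂ) r, P (t • e) ≠ 0) :
    ∃ δ > 0, ∀ᶠ x in 𝓝 (0 : E), ∀ t ∈ sphere (0 : ℂ) r, δ ≤ ‖P (x + t • e)‖ := by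
  have hcont (t : ℂ) (ht : t ∈ sphere 0 r) :
      ContinuousAt (fun z : E × ℂ => P (z.1 + z.2 • e)) (0, t) := by
    refine ContinuousAt.comp (g := P) ?_ (by fun_prop)
    simpa using hP t ht
  have hcont' : ContinuousOn (fun t : ℂ => ‖P (t • e)‖) (sphere 0 r) := fun t ht =>
    (ContinuousAt.comp (f := fun t : ℂ => t • e) (hP t ht)
      (by fun_prop)).norm.continuousWithinAt
  obtain ⟨m, hm, hle⟩ := (isCompact_sphere (0 : ℂ) r).exists_forall_le' hcont'
    fun t ht => norm_pos_iff.2 (hne t ht)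
  refine ⟨m / 2, half_pos hm,
    (isCompact_sphere (0 : ℂ) r).eventually_forall_of_forall_eventually fun t ht => ?_⟩
  have hlt : m / 2 < ‖P (0 + t • e)‖ := by
    rw [zero_add]
    exact (half_lt_self hm).trans_le (hle t ht)
  exact (continuousAt_const.eventually_lt (hcont t ht).norm hlt).mono fun _ => le_of_lt

lemma exists_slice_eventually (hP : DifferentiableOn ℂ P (ball 0 R)) (hP0 : P 0 = 0)
    (hPne : ∃ x ∈ ball 0 R, P x ≠ 0) :
    ∃ e : E, ∃ r > 0, ∃ δ > 0, ∀ᶠ x in 𝓝 (0 : E),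
      (∀ t ∈ closedBall (0 : ℂ) r, x + t • e ∈ ball 0 R) ∧
      (∀ t ∈ sphere (0 : ℂ) r, δ ≤ ‖P (x + t • e)‖) ∧ ‖P x‖ < δ := by
  obtain ⟨e, he, hPe⟩ := hPne
  obtain ⟨r, ⟨hr0, hr1⟩, hPr⟩ := exists_sphere_forall_apply_smul_ne_zero hP he hPe
  have hPcont {x : E} (hx : x ∈ ball 0 R) : ContinuousAt P x :=
    hP.continuousOn.continuousAt (isOpen_ball.mem_nhds hx)
  have heR : 0 < R - ‖e‖ := sub_pos.2 (mem_ball_zero_iff.1 he)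
  have hline : ∀ x ∈ ball 0 (R - ‖e‖), ∀ t ∈ closedBall (0 : ℂ) r, x + t • e ∈ ball 0 R := by
    intro x hx t ht
    rw [mem_ball_zero_iff] at hx ⊢
    calc ‖x + t • e‖ ≤ ‖x‖ + ‖t‖ * ‖e‖ := (norm_add_le _ _).trans_eq (by rw [norm_smul])
      _ ≤ ‖x‖ + ‖e‖ := by
        gcongr
        exact mul_le_of_le_one_left (norm_nonneg e) ((mem_closedBall_zero_iff.1 ht).trans hr1.le)
      _ < R := by linarith
  have hP_line : ∀ t ∈ sphere (0 : ℂ) r, ContinuousAt P (t • e) := fun t ht =>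
    hPcont (by simpa using hline 0 (mem_ball_self heR) t (sphere_subset_closedBall ht))
  obtain ⟨δ, hδ, hsphere⟩ := exists_pos_eventually_forall_sphere_le_norm hP_line hPr
  have hsmall : ∀ᶠ x in 𝓝 (0 : E), ‖P x‖ < δ := by
    have hcont0 : ContinuousAt P 0 := hPcont (mem_ball_self (nonempty_ball.1 ⟨e, he⟩))
    exact hcont0.norm.eventually_lt continuousAt_const (by simpa [hP0] using hδ)
  exact ⟨e, r, hr0, δ, hδ, (eventually_of_mem (ball_mem_nhds 0 heR) hline).and
    (hsphere.and hsmall)⟩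

/-- The set of `x` in the ball of radius `r` with `P x` in the open sector of directions `(a, b)`,
away from the zeros of `Q`. The `P`-sector of `ℂ ^ d` is the case where `Q` is the product of
the coordinates. -/
def germSector (P Q : E → ℂ) (a b r : ℝ) : Set E :=
  {x ∈ ball 0 r | Q x ≠ 0 ∧ P x ∈ angularSector a b}

lemma diffContOnCl_comp_add_smul {g : E → F} (hg : DifferentiableOn ℂ g (ball 0 R)) {x e : E}
    {r : ℝ} (hr : r ≠ 0) (hline : ∀ t ∈ closedBall (0 : ℂ) r, x + t • e ∈ ball 0 R) :
    DiffContOnCl ℂ (fun t : ℂ => g (x + t • e)) (ball 0 r) := by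
  refine DifferentiableOn.diffContOnCl ?_
  rw [closure_ball 0 hr]
  exact hg.comp (by fun_prop) hline

lemma eq_zero_of_gevrey_on_slice (hs : 0 < s) (hP : DifferentiableOn ℂ P (ball 0 R))
    (hQ : DifferentiableOn ℂ Q (ball 0 R)) (hab : b ≤ a + 2 * π) (hopen : s * π < b - a)
    (hA : 0 ≤ A) (hf : DifferentiableOn ℂ f (germSector P Q a b R))
    (hest : ∀ N : ℕ, ∀ x ∈ germSector P Q a b R,
      ‖f x‖ ≤ K * A ^ N * Real.Gamma (s * N + 1) * ‖P x‖ ^ N)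
    {x e : E} {r δ : ℝ} (hr : 0 < r) (hδ : 0 < δ)
    (hline : ∀ t ∈ closedBall (0 : ℂ) r, x + t • e ∈ ball 0 R)
    (hsphere : ∀ t ∈ sphere (0 : ℂ) r, δ ≤ ‖P (x + t • e)‖)
    (hxδ : ‖P x‖ < δ) (hx : x ∈ germSector P Q a b R) : f x = 0 := by
  obtain ⟨κ, hκ, hsκ, hκab, hxκ⟩ :=
    exists_sectorNormalization_mem_unitSector hs hab hopen hx.2.2 hxδ
  set p : ℂ → ℂ := fun t => sectorNormalization a b δ (P (x + t • e))
  set w : ℂ → ℂ := fun t => P (x + t • e) * Q (x + t • e)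
  have hPline := diffContOnCl_comp_add_smul hP hr.ne' hline
  have hp : DiffContOnCl ℂ p (ball 0 r) :=
    differentiable_sectorNormalization.comp_diffContOnCl hPline
  have hw : DiffContOnCl ℂ w (ball 0 r) :=
    hPline.smul (diffContOnCl_comp_add_smul hQ hr.ne' hline)
  have hpw (t : ℂ) (hwt : w t ≠ 0) : p t ≠ 0 :=
    sectorNormalization_ne_zero hδ (left_ne_zero_of_mul hwt)
  have hpfr : ∀ t ∈ frontier (ball 0 r), 1 ≤ ‖p t‖ := by
    intro t ht
    rw [frontier_ball 0 hr.ne'] at ht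
    rw [← le_mul_iff_one_le_right hδ, mul_norm_sectorNormalization hδ]
    exact hsphere t ht
  have hmaps : MapsTo (fun t : ℂ => x + t • e) (closedSectorRegion (ball 0 r) p w κ)
      (germSector P Q a b R) := by
    rintro t ⟨ht, hwt, hpt⟩
    rw [closure_ball 0 hr.ne'] at ht
    exact ⟨hline t ht, right_ne_zero_of_mul hwt,
      mem_angularSector_of_sectorNormalization_mem_closure hκ hab hκab hδ
        (left_ne_zero_of_mul hwt) hpt⟩
  have hest_line : ∀ N : ℕ, ∀ t ∈ closedSectorRegion (ball 0 r) p w κ,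
      ‖f (x + t • e)‖ ≤ K * (A * δ) ^ N * Real.Gamma (s * N + 1) * ‖p t‖ ^ N := by
    intro N t ht
    have hN := hest N _ (hmaps ht)
    rw [← mul_norm_sectorNormalization (a := a) (b := b) hδ] at hN
    exact hN.trans_eq (by ring)
  have hx0 : (0 : ℂ) ∈ sectorRegion (ball 0 r) p w κ := by
    refine ⟨mem_ball_self hr, ?_, ?_⟩
    · simpa [w] using ⟨hx.2.2.1, hx.2.1⟩
    · simpa [p] using hxκ
  simpa using eq_zero_of_gevrey_of_mem_sectorRegion hs hκ hsκ isOpen_ball isBounded_ball hp hw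
    (fun t _ => hpw t) hpfr (hf.comp (by fun_prop) hmaps) (mul_nonneg hA hδ.le) hest_line hx0

theorem watson_lemma_for_germ_asymptotics_general (hs : 0 < s)
    (hP : DifferentiableOn ℂ P (ball 0 R)) (hP0 : P 0 = 0) (hPne : ∃ x ∈ ball 0 R, P x ≠ 0)
    (hQ : DifferentiableOn ℂ Q (ball 0 R)) (hab : b ≤ a + 2 * π) (hopen : s * π < b - a)
    (hf : DifferentiableOn ℂ f (germSector P Q a b R)) (hA : 0 ≤ A)
    (hest : ∀ N : ℕ, ∀ x ∈ germSector P Q a b R,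
      ‖f x‖ ≤ K * A ^ N * Real.Gamma (s * N + 1) * ‖P x‖ ^ N) :
    ∃ ρ > 0, ∀ x ∈ germSector P Q a b R ∩ ball 0 ρ, f x = 0 := by
  obtain ⟨e, r, hr, δ, hδ, hslice⟩ := exists_slice_eventually hP hP0 hPne
  obtain ⟨ρ, hρ, h⟩ := Metric.eventually_nhds_iff_ball.1 hslice
  refine ⟨ρ, hρ, fun x ⟨hx, hxρ⟩ => ?_⟩
  obtain ⟨hxline, hxsphere, hxδ⟩ := h x hxρ
  exact eq_zero_of_gevrey_on_slice hs hP hQ hab hopen hA hf hest hr hδ hxline hxsphere hxδ hx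

end Slices

lemma polydisk_eq_ball (d : ℕ) {r : ℝ} (hr : 0 < r) : polydisk d r = ball 0 r := by
  ext x
  rw [mem_ball_zero_iff, pi_norm_lt_iff hr]
  rfl

lemma PSector_eq_germSector (d : ℕ) (P : (Fin d → ℂ) → ℂ) (a b : ℝ) {r : ℝ} (hr : 0 < r) :
    PSector d P a b r = germSector P (fun x => ∏ j, x j) a b r := by
  ext x
  simp only [PSector, germSector, angularSector, ← polydisk_eq_ball d hr, polydisk, mem_ofPred_eq,
    Finset.prod_ne_zero_iff, Finset.mem_univ, forall_const, norm_pos_iff, forall_and]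
  tauto

/-- **Watson's lemma for asymptotics with respect to a germ** (Lemma 7.19).
If `Π = Π_P(θ₁,θ₂;R)` has opening `θ₂ − θ₁ > sπ` and a holomorphic `f` on `Π` has the zero
series as `P`-`s`-Gevrey asymptotic expansion, then `f` vanishes identically near `0`. -/
theorem watson_lemma_for_germ_asymptotics
    (d : ℕ) (hd : 1 ≤ d) (s : ℝ) (hs : 0 < s) (R : ℝ) (hR : 0 < R)
    (P : (Fin d → ℂ) → ℂ) (hP : AnalyticOnNhd ℂ P (polydisk d R))
    (hP0 : P 0 = 0) (hPne : ∃ x ∈ polydisk d R, P x ≠ 0)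
    (θ₁ θ₂ : ℝ) (hθ : θ₁ < θ₂) (hθ2 : θ₂ ≤ θ₁ + 2 * Real.pi)
    (hopen : s * Real.pi < θ₂ - θ₁)
    (f : (Fin d → ℂ) → ℂ) (hf : AnalyticOnNhd ℂ f (PSector d P θ₁ θ₂ R))
    (K A : ℝ) (hK : 0 < K) (hA : 0 < A)
    (hest : ∀ N : ℕ, ∀ x ∈ PSector d P θ₁ θ₂ R,
      ‖f x‖ ≤
        K * A ^ N * Real.Gamma (s * N + 1) * ‖P x‖ ^ N) :
    ∃ ρ > 0, ∀ x ∈ PSector d P θ₁ θ₂ R ∩ polydisk d ρ, f x = 0 := by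
  rw [polydisk_eq_ball d hR] at hP hPne
  rw [PSector_eq_germSector d P θ₁ θ₂ hR] at hf hest ⊢
  obtain ⟨ρ, hρ, hzero⟩ := watson_lemma_for_germ_asymptotics_general hs hP.differentiableOn hP0 hPne
    (by fun_prop) hθ2 hopen hf.differentiableOn hA.le hest
  exact ⟨ρ, hρ, by rwa [polydisk_eq_ball d hρ]⟩
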